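/- F^{R3}_1 = {(x,X) ∈ ℝ^n × S^n : eᵀx = 1, X = Diag(x), x ≥ 0} = conv{(e^j, e^j(e^j)ᵀ) : j = 1,…,n}, where e^j denotes the j-th unit vector. -/

import Mathlib

open Matrix BigOperators

noncomputable section

def R1Feasible {n : ℕ} (ρ : ℕ) (x u : Fin n → ℝ)
    (X U R : Matrix (Fin n) (Fin n) ℝ) : Prop :=
  X.IsSymm ∧ U.IsSymm ∧
  (∑ i, x i) = 1 ∧
  (∑ i, u i) = (ρ : ℝ) ∧
  (∀ i, x i ≤ u i) ∧
  (∀ i, 0 ≤ x i) ∧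
  (∀ i, U i i = u i) ∧
  (∀ i, (∑ j, X i j) = x i) ∧
  (∀ j, (∑ i, R i j) = u j) ∧
  (∀ i, (∑ j, R i j) = (ρ : ℝ) * x i) ∧
  (∀ i, (∑ j, U i j) = (ρ : ℝ) * u i) ∧
  (∀ i j, 0 ≤ X i j - R j i - R i j + U i j) ∧
  (∀ i j, X i j - R j i ≤ 0) ∧
  (∀ i j, R i j - U i j ≤ 0) ∧
  (∀ i j, 0 ≤ X i j) ∧ (∀ i j, 0 ≤ R i j) ∧ (∀ i j, 0 ≤ U i j)

def FR1proj (n ρ : ℕ) : Set ((Fin n → ℝ) × Matrix (Fin n) (Fin n) ℝ) :=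
  {p | ∃ u U R, R1Feasible ρ p.1 u p.2 U R}

def FR1 (n : ℕ) : Set ((Fin n → ℝ) × Matrix (Fin n) (Fin n) ℝ) :=
  {p | p.2.IsSymm ∧ (∑ i, p.1 i) = 1 ∧ (∀ i, (∑ j, p.2 i j) = p.1 i) ∧
    (∀ i, 0 ≤ p.1 i) ∧ (∀ i j, 0 ≤ p.2 i j)}

def bigMat {n : ℕ} (x u : Fin n → ℝ) (X U R : Matrix (Fin n) (Fin n) ℝ) :
    Matrix (Unit ⊕ (Fin n ⊕ Fin n)) (Unit ⊕ (Fin n ⊕ Fin n)) ℝ :=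
  Matrix.fromBlocks (Matrix.of fun _ _ => (1 : ℝ))
    (Matrix.of fun (_ : Unit) j => Sum.elim x u j)
    (Matrix.of fun i (_ : Unit) => Sum.elim x u i)
    (Matrix.fromBlocks X R Rᵀ U)

def R3Feasible {n : ℕ} (ρ : ℕ) (x u : Fin n → ℝ)
    (X U R : Matrix (Fin n) (Fin n) ℝ) : Prop :=
  R1Feasible ρ x u X U R ∧ (bigMat x u X U R).PosSemidef

def FR3proj (n ρ : ℕ) : Set ((Fin n → ℝ) × Matrix (Fin n) (Fin n) ℝ) :=
  {p | ∃ u U R, R3Feasible ρ p.1 u p.2 U R}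

/-!
For `ρ = 1` the rows of `U ≥ 0` sum to the diagonal entries of `U`, so `U` is diagonal. As
`0 ≤ X ≤ Rᵀ ≤ Uᵀ`, so is `X`, and its row sums force `X = Diag(x)`. Conversely, with
`D = Diag(x)`, `u = x` and `X = R = U = D`, the block matrix factors as `[e I I]ᵀ D [e I I]`. Hence
the set is the image of the standard simplex under the linear map `x ↦ (x, Diag(x))`, and linear
maps commute with convex hulls.
-/

section Diagonal

variable {ι α : Type*}

theorem isDiag_of_nonneg_of_le [Zero α] [PartialOrder α] {A B : Matrix ι ι α}
    (hA : ∀ i j, 0 ≤ A i j) (hAB : ∀ i j, A i j ≤ B i j) (hB : B.IsDiag) : A.IsDiag :=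
  fun i j hij => le_antisymm ((hAB i j).trans_eq (hB hij)) (hA i j)

variable [Fintype ι]

theorem isDiag_of_sum_row_eq_diag [AddCommMonoid α] [PartialOrder α] [IsOrderedCancelAddMonoid α]
    {A : Matrix ι ι α} (hA : ∀ i j, 0 ≤ A i j) (hsum : ∀ i, ∑ j, A i j = A i i) : A.IsDiag := by
  classical
  intro i j hij
  have hoff : ∑ k ∈ Finset.univ.erase i, A i k = 0 := by
    rw [← add_eq_left (a := A i i), Finset.add_sum_erase _ _ (Finset.mem_univ i), hsum]
  exact (Finset.sum_eq_zero_iff_of_nonneg fun k _ => hA i k).1 hoff j (by simp [hij.symm])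

theorem eq_diagonal_sum_row_of_isDiag [DecidableEq ι] [AddCommMonoid α] {A : Matrix ι ι α}
    (hA : A.IsDiag) : A = diagonal fun i => ∑ j, A i j := by
  rw [← hA.diagonal_diag]
  simp [diagonal_apply]

end Diagonal

section DiagonalLift

variable (𝕜 ι : Type*) [DecidableEq ι]

/-- The linear lift `x ↦ (x, Diag(x))`, which embeds the standard simplex into the space of pairs
`(x, X)`. -/
def diagonalLift [CommSemiring 𝕜] : (ι → 𝕜) →ₗ[𝕜] (ι → 𝕜) × Matrix ι ι 𝕜 :=
  LinearMap.id.prod (diagonalLinearMap ι 𝕜 𝕜)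

theorem diagonalLift_single [CommSemiring 𝕜] (j : ι) :
    diagonalLift 𝕜 ι (Pi.single j 1) =
      (Pi.single j 1, vecMulVec (Pi.single j 1) (Pi.single j 1)) :=
  Prod.ext rfl <| (diagonal_single j 1).trans (single_eq_single_vecMulVec_single j j)

variable [Fintype ι]

theorem diagonalLift_image_stdSimplex [CommSemiring 𝕜] [PartialOrder 𝕜] :
    diagonalLift 𝕜 ι '' stdSimplex 𝕜 ι =
      {p | (∑ i, p.1 i) = 1 ∧ p.2 = diagonal p.1 ∧ ∀ i, 0 ≤ p.1 i} := by
  ext ⟨x, X⟩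
  constructor
  · rintro ⟨_, ⟨hnonneg, hsum⟩, ⟨⟩⟩
    exact ⟨hsum, rfl, hnonneg⟩
  · rintro ⟨hsum, hdiag, hnonneg⟩
    exact ⟨x, ⟨hnonneg, hsum⟩, Prod.ext rfl hdiag.symm⟩

theorem diagonalLift_image_stdSimplex_eq_convexHull
    [Field 𝕜] [LinearOrder 𝕜] [IsStrictOrderedRing 𝕜] :
    diagonalLift 𝕜 ι '' stdSimplex 𝕜 ι =
      convexHull 𝕜 {p | ∃ j : ι, p =
        ((Pi.single j 1 : ι → 𝕜), vecMulVec (Pi.single j 1) (Pi.single j 1))} := by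
  rw [← convexHull_rangle_single_eq_stdSimplex, LinearMap.image_convexHull, ← Set.range_comp]
  congr 1
  ext p
  simp only [Set.mem_range, Function.comp_apply, diagonalLift_single, Set.mem_ofPred_eq, eq_comm]

end DiagonalLift

section Feasible

variable {n : ℕ}

theorem R1Feasible.eq_diagonal {x u : Fin n → ℝ} {X U R : Matrix (Fin n) (Fin n) ℝ}
    (h : R1Feasible 1 x u X U R) : X = diagonal x := by
  obtain ⟨-, -, -, -, -, -, hUdiag, hXsum, -, -, hUsum, -, hXR, hRU, hX, -, hU⟩ := h
  have hUisDiag : U.IsDiag :=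
    isDiag_of_sum_row_eq_diag hU fun i => by rw [hUsum, hUdiag, Nat.cast_one, one_mul]
  have hXU : ∀ i j, X i j ≤ Uᵀ i j := fun i j =>
    (sub_nonpos.1 (hXR i j)).trans (sub_nonpos.1 (hRU j i))
  have hXisDiag : X.IsDiag := isDiag_of_nonneg_of_le hX hXU hUisDiag.transpose
  rw [eq_diagonal_sum_row_of_isDiag hXisDiag, funext hXsum]

theorem r1Feasible_diagonal {x : Fin n → ℝ} (hx : x ∈ stdSimplex ℝ (Fin n)) :
    R1Feasible 1 x x (diagonal x) (diagonal x) (diagonal x) := by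
  obtain ⟨hnonneg, hsum⟩ := hx
  have hentry : ∀ i j, 0 ≤ diagonal x i j := fun i j => by
    rw [diagonal_apply]
    split_ifs
    exacts [hnonneg i, le_rfl]
  have hsymm : ∀ i j, diagonal x j i = diagonal x i j := (isSymm_diagonal x).apply
  refine ⟨isSymm_diagonal x, isSymm_diagonal x, hsum, ?_, fun _ => le_rfl, hnonneg,
    diagonal_apply_eq x, ?_, ?_, ?_, ?_, ?_, ?_, ?_, hentry, hentry, hentry⟩ <;>
    simp [hsum, hsymm, diagonal_apply]

/-- The `n × (2n+1)` matrix `[e I I]`, whose columns are indexed like those of `bigMat`; it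
factors `bigMat x x D D D`, where `D = Diag(x)`, through the smaller matrix `D`. -/
def bigMatFactor (n : ℕ) : Matrix (Fin n) (Unit ⊕ (Fin n ⊕ Fin n)) ℝ :=
  fromCols (replicateCol Unit 1) (fromCols 1 1)

theorem bigMat_diagonal_eq {x : Fin n → ℝ} (hsum : ∑ i, x i = 1) :
    bigMat x x (diagonal x) (diagonal x) (diagonal x) =
      (bigMatFactor n)ᴴ * diagonal x * bigMatFactor n := by
  rw [bigMat, bigMatFactor, conjTranspose_fromCols_eq_fromRows_conjTranspose, fromRows_mul,
    fromRows_mul_fromCols, conjTranspose_fromCols_eq_fromRows_conjTranspose, fromRows_mul,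
    fromRows_mul_fromCols]
  simp only [conjTranspose_one, Matrix.one_mul, Matrix.mul_one, diagonal_transpose]
  congr 1
  · ext; simp [mul_apply, diagonal_apply, hsum]
  · ext _ (j | j) <;> simp
  · ext (i | i) <;> simp

theorem r3Feasible_diagonal {x : Fin n → ℝ} (hx : x ∈ stdSimplex ℝ (Fin n)) :
    R3Feasible 1 x x (diagonal x) (diagonal x) (diagonal x) := by
  refine ⟨r1Feasible_diagonal hx, ?_⟩
  rw [bigMat_diagonal_eq hx.2]
  exact (PosSemidef.diagonal hx.1).conjTranspose_mul_mul_same _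

theorem FR3proj_subset_FR1proj (n ρ : ℕ) : FR3proj n ρ ⊆ FR1proj n ρ :=
  fun _ ⟨u, U, R, h⟩ => ⟨u, U, R, h.1⟩

theorem FR1proj_one_subset_image_stdSimplex (n : ℕ) :
    FR1proj n 1 ⊆ diagonalLift ℝ (Fin n) '' stdSimplex ℝ (Fin n) := by
  rintro ⟨x, X⟩ ⟨u, U, R, h⟩
  have ⟨_, _, hsum, _, _, hnonneg, _⟩ := h
  exact ⟨x, ⟨hnonneg, hsum⟩, Prod.ext rfl h.eq_diagonal.symm⟩

theorem FR3proj_one_eq_image_stdSimplex (n : ℕ) :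
    FR3proj n 1 = diagonalLift ℝ (Fin n) '' stdSimplex ℝ (Fin n) := by
  refine ((FR3proj_subset_FR1proj n 1).trans ?_).antisymm ?_
  · exact FR1proj_one_subset_image_stdSimplex n
  · rintro _ ⟨x, hx, rfl⟩
    exact ⟨x, _, _, r3Feasible_diagonal hx⟩

end Feasible

theorem stmt13 {n : ℕ} (hn : 0 < n) :
    FR3proj n 1 =
      {p : (Fin n → ℝ) × Matrix (Fin n) (Fin n) ℝ |
        (∑ i, p.1 i) = 1 ∧ p.2 = Matrix.diagonal p.1 ∧ ∀ i, 0 ≤ p.1 i} ∧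
    FR3proj n 1 =
      convexHull ℝ
        {p : (Fin n → ℝ) × Matrix (Fin n) (Fin n) ℝ |
          ∃ j : Fin n, p = ((Pi.single j 1 : Fin n → ℝ),
            Matrix.vecMulVec (Pi.single j 1) (Pi.single j 1))} := by
  rw [FR3proj_one_eq_image_stdSimplex]
  exact ⟨diagonalLift_image_stdSimplex ℝ (Fin n),
    diagonalLift_image_stdSimplex_eq_convexHull ℝ (Fin n)⟩

end
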